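/- Let e : Stream' ℕ → Stream' ℕ be any function satisfying e xs = SCons (2 ^ head xs) ((tail xs) ⊗ (e xs)) for all streams xs, where ⊗ is the shuffle product (binomial convolution). Then there exists exactly one stream y : Stream' ℕ satisfying y = e (SCons 0 y); moreover this unique stream is the stream of factorials starting at 0: y.get n = n! for all n. -/

import Mathlib

open Stream'

/-- Shuffle product of streams (binomial convolution). -/
def sshuffle (xs ys : Stream' ℕ) : Stream' ℕ :=
  fun n => ∑ k ∈ Finset.range (n + 1), n.choose k * xs.get k * ys.get (n - k)

infixl:70 " ⊗ " => sshuffle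

theorem fact_sum (n : ℕ) (f z : Stream' ℕ) (hf : ∀ k ≤ n, f.get k = k.factorial)
    (hz : ∀ k ≤ n, z.get k = k.factorial) :
    (f ⊗ z).get n = (n + 1).factorial := by
  change ∑ k ∈ Finset.range (n + 1), n.choose k * f.get k * z.get (n - k) = _
  rw [Finset.sum_congr rfl (g := fun _ => n.factorial)]
  · simp [Nat.factorial_succ]
  · intro k hk
    have hk' : k ≤ n := by simpa [Nat.lt_succ_iff] using hk
    rw [hf k hk', hz _ (Nat.sub_le n k), Nat.choose_mul_factorial_mul_factorial hk']

theorem stmt_13 (e : Stream' ℕ → Stream' ℕ)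
    (he : ∀ xs, e xs = Stream'.cons (2 ^ xs.head) (xs.tail ⊗ e xs)) :
    (∃! y : Stream' ℕ, y = e (Stream'.cons 0 y)) ∧
    (∀ y : Stream' ℕ, y = e (Stream'.cons 0 y) →
      ∀ n, y.get n = Nat.factorial n) := by
  have key : ∀ y : Stream' ℕ, y = e (Stream'.cons 0 y) →
      ∀ n, y.get n = Nat.factorial n := by
    intro y hy n
    have h := he (Stream'.cons 0 y)
    rw [← hy] at h
    induction n using Nat.strong_induction_on with
    | _ n ih =>
      cases n with
      | zero => rw [h]; rfl
      | succ n =>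
        rw [h]
        exact fact_sum n y y (fun k hk => ih k (by omega)) (fun k hk => ih k (by omega))
  refine ⟨⟨(fun n => n.factorial : ℕ → ℕ), ?_, ?_⟩, key⟩
  · apply Stream'.ext
    intro n
    symm
    set f : Stream' ℕ := (fun n => n.factorial : ℕ → ℕ)
    have h := he (Stream'.cons 0 f)
    change (e (Stream'.cons 0 f)).get n = n.factorial
    generalize e (Stream'.cons 0 f) = z at h
    induction n using Nat.strong_induction_on with
    | _ n ih =>
      cases n with
      | zero => rw [h]; rfl
      | succ n =>
        rw [h]
        exact fact_sum n f z (fun k _ => rfl) (fun k hk => ih k (by omega))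
  · intro y hy
    exact Stream'.ext (key y hy)
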